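/- Let T be a uniquely ergodic continuous map of a compact metric space X with unique invariant probability measure μ. Let 1 = b₁ < b₂ < ⋯ be an increasing sequence of integers with b_{k+1} − b_k → ∞ and let (x_k) be an arbitrary sequence of points in X. Define y ∈ X^ℕ by y_n := Tⁿ x_k whenever b_k ≤ n < b_{k+1}, let S be the shift on X^ℕ (with the product topology), and let Y be the closure of the forward orbit {Sⁿ y : n ≥ 0} in X^ℕ. Then (Y,S) is uniquely ergodic; its unique S-invariant probability measure ν is the pushforward of μ under the map x ↦ (x, Tx, T²x, …) (equivalently, ν(A₁ × A₂ × ⋯ × A_m × X × X × ⋯) = μ(A₁ ∩ T⁻¹A₂ ∩ ⋯ ∩ T^{−m+1}A_m)); and the measure-theoretic system (Y,ν,S) is measure-theoretically isomorphic to (X,μ,T). -/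

import Mathlib

/-!
Call `n` a defect of `y` if `y (n + 1) ≠ T (y n)`. Defects occur only at the ends of the blocks
`[b k, b (k + 1))`, whose lengths tend to infinity, so they form a set of upper Banach density
zero. Consequently an invariant measure `κ` on the orbit closure of `y` gives mass zero to the open
set `{z | z 1 ≠ T (z 0)}`: the number of visits to this set within a time window of length `M` is
lower semicontinuous, hence the bound `ε M`, valid along the orbit of `y`, passes to `κ`-almost
every point, and integrating it against `κ` bounds the mass by `ε`. So `κ`-almost every `z` is the
`T`-orbit of `z 0`, the zeroth marginal of `κ` is `T`-invariant, hence equal to `μ`, and `κ` is the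
image of `μ` under `p ↦ (p, T p, T² p, …)`. By Krylov–Bogolyubov such a `κ` exists, which is why
this image of `μ` is carried by the orbit closure.
-/

open MeasureTheory Filter

/-- `S` is uniquely ergodic with unique invariant Borel probability measure `ν`. -/
def UniquelyErgodicWith {Y : Type*} [MeasurableSpace Y] (S : Y → Y) (ν : Measure Y) : Prop :=
  IsProbabilityMeasure ν ∧ ν.map S = ν ∧
  ∀ μ' : Measure Y, IsProbabilityMeasure μ' → μ'.map S = μ' → μ' = ν

/-- `(X,μ,T)` and `(Y,ν,S)` are measure-theoretically isomorphic: there is an invertible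
(mod 0) measure-preserving map intertwining the transformations almost everywhere. -/
def MeasureIso {X Y : Type*} [MeasurableSpace X] [MeasurableSpace Y]
    (T : X → X) (μ : Measure X) (S : Y → Y) (ν : Measure Y) : Prop :=
  ∃ φ : X → Y, ∃ ψ : Y → X, Measurable φ ∧ Measurable ψ ∧
    μ.map φ = ν ∧
    (∀ᵐ x ∂μ, ψ (φ x) = x) ∧ (∀ᵐ y ∂ν, φ (ψ y) = y) ∧
    (∀ᵐ x ∂μ, φ (T x) = S (φ x))

section BanachDensity

open scoped NNReal

/-- The set `A` has upper Banach density zero: for every `ε > 0` there is a window length `M` such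
that all windows `[n, n + M)` far enough out contain at most `ε M` elements of `A`. -/
def BanachDensityZero (A : Set ℕ) : Prop :=
  ∀ ε : ℝ≥0, 0 < ε → ∃ M > 0, ∀ᶠ n in atTop, ((A ∩ Set.Ico n (n + M)).ncard : ℝ≥0) ≤ ε * M

theorem banachDensityZero_of_gaps {A : Set ℕ}
    (hA : ∀ M, ∀ᶠ n in atTop, n ∈ A → ∀ m ∈ A, n < m → n + M ≤ m) : BanachDensityZero A := by
  intro ε hε
  obtain ⟨M, hM⟩ := exists_nat_ge ε⁻¹
  have one_le : 1 ≤ ε * M := by rwa [← div_le_iff₀' hε, one_div]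
  have M_pos : 0 < M := by
    rw [← Nat.cast_pos (α := ℝ≥0)]
    exact (inv_pos.2 hε).trans_le hM
  refine ⟨M, M_pos, ?_⟩
  filter_upwards [eventually_forall_ge_atTop.2 (hA M)] with n hn
  have subsingleton : ∀ i ∈ A ∩ Set.Ico n (n + M), ∀ j ∈ A ∩ Set.Ico n (n + M), i ≤ j := by
    rintro i ⟨hi, -, hin⟩ j ⟨hj, hnj, -⟩
    by_contra! hji
    have := hn j hnj hj i hi hji
    omega
  have card_le_one : (A ∩ Set.Ico n (n + M)).ncard ≤ 1 :=
    (Set.ncard_le_one ((Set.finite_Ico _ _).inter_of_right _)).2 fun i hi j hj =>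
      (subsingleton i hi j hj).antisymm (subsingleton j hj i hi)
  exact le_trans (mod_cast card_le_one) one_le

theorem banachDensityZero_of_eventually_succ_mem_range {A : Set ℕ} {c : ℕ → ℕ} (hc : StrictMono c)
    (hgap : Tendsto (fun k => c (k + 1) - c k) atTop atTop)
    (hA : ∀ᶠ n in atTop, n ∈ A → n + 1 ∈ Set.range c) : BanachDensityZero A := by
  refine banachDensityZero_of_gaps fun M => ?_
  obtain ⟨K, hK⟩ := (hgap.eventually_ge_atTop M).exists_forall_of_atTop
  filter_upwards [eventually_forall_ge_atTop.2 hA, eventually_ge_atTop (c K)]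
    with n hn hKn hnA m hmA hnm
  obtain ⟨i, hi⟩ := hn n le_rfl hnA
  obtain ⟨j, hj⟩ := hn m hnm.le hmA
  have K_le : K ≤ i := hc.le_iff_le.1 (by omega)
  have i_lt_j : i < j := hc.lt_iff_lt.1 (by omega)
  have gap_le := hK i K_le
  have succ_le := hc.monotone (Nat.succ_le_of_lt i_lt_j)
  have lt_succ := hc (Nat.lt_add_one i)
  rw [Nat.succ_eq_add_one] at succ_le
  omega

end BanachDensity

section Defects

variable {X : Type*} {T : X → X} {y : ℕ → X}

/-- The times at which the sequence `y` fails to follow the dynamics of `T`. -/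
def defects (T : X → X) (y : ℕ → X) : Set ℕ := {n | y (n + 1) ≠ T (y n)}

theorem succ_mem_range_of_mem_defects {c : ℕ → ℕ} (hc : StrictMono c) {x : ℕ → X}
    (hy : ∀ k n, c k ≤ n → n < c (k + 1) → y n = T^[n] (x k)) {n : ℕ} (hn : c 0 ≤ n)
    (hdefect : n ∈ defects T y) : n + 1 ∈ Set.range c := by
  have blocks_cover : ⋃ k, Set.Ico (c k) (c (k + 1)) = Set.Ici (c 0) :=
    iUnion_Ico_map_succ_eq_Ici (fun k => hc.monotone k.zero_le)
      hc.not_bddAbove_range_of_isSuccArchimedean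
  obtain ⟨k, hkn, hnk⟩ := Set.mem_iUnion.1 (blocks_cover.ge hn)
  refine ⟨k + 1, le_antisymm ?_ hnk⟩
  by_contra! hlt
  refine hdefect ?_
  rw [hy k n hkn hnk, hy k (n + 1) (by omega) hlt, Function.iterate_succ_apply']

theorem banachDensityZero_defects_of_orbit_blocks {c : ℕ → ℕ} (hc : StrictMono c)
    (hgap : Tendsto (fun k => c (k + 1) - c k) atTop atTop) {x : ℕ → X}
    (hy : ∀ k n, c k ≤ n → n < c (k + 1) → y n = T^[n] (x k)) :
    BanachDensityZero (defects T y) :=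
  banachDensityZero_of_eventually_succ_mem_range hc hgap <|
    (eventually_ge_atTop (c 0)).mono fun _ => succ_mem_range_of_mem_defects hc hy

end Defects

section OrbitClosure

open scoped ENNReal NNReal

variable {E : Type*} {S : E → E} {y : E}

theorem lowerSemicontinuous_birkhoffSum [TopologicalSpace E] (hS : Continuous S) {f : E → ℝ≥0∞}
    (hf : LowerSemicontinuous f) (M : ℕ) : LowerSemicontinuous (birkhoffSum S f M) :=
  lowerSemicontinuous_sum fun i _ => hf.comp (hS.iterate i)

theorem lintegral_birkhoffSum [MeasurableSpace E] {κ : Measure E} (hS : MeasurePreserving S κ κ)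
    {f : E → ℝ≥0∞} (hf : Measurable f) (M : ℕ) :
    ∫⁻ z, birkhoffSum S f M z ∂κ = M * ∫⁻ z, f z ∂κ := by
  simp only [birkhoffSum]
  rw [lintegral_finsetSum (Finset.range M) (f := fun i z => f (S^[i] z))
    fun i _ => hf.comp (hS.iterate i).measurable]
  simp only [(hS.iterate _).lintegral_comp hf, Finset.sum_const, Finset.card_range, nsmul_eq_mul]

theorem birkhoffSum_indicator_one_iterate (S : E → E) (U : Set E) (M n : ℕ) (y : E) :
    birkhoffSum S (U.indicator 1) M (S^[n] y) =
      (({m | S^[m] y ∈ U} ∩ Set.Ico n (n + M)).ncard : ℝ≥0∞) := by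
  classical
  have visits_eq : {m | S^[m] y ∈ U} ∩ Set.Ico n (n + M) =
      ({m ∈ Finset.Ico n (n + M) | S^[m] y ∈ U} : Finset ℕ) := by
    ext m
    simp [and_comm]
  rw [visits_eq, Set.ncard_coe_finset, Finset.card_filter, Finset.sum_Ico_eq_sum_range, birkhoffSum]
  simp [Set.indicator_apply, ← Function.iterate_add_apply, add_comm]

/-- The closure of the forward `S`-orbit of `y`. -/
def orbitClosure [TopologicalSpace E] (S : E → E) (y : E) : Set E :=
  closure {z | ∃ n : ℕ, z = S^[n] y}

theorem iterate_mem_orbitClosure [TopologicalSpace E] (S : E → E) (y : E) (n : ℕ) :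
    S^[n] y ∈ orbitClosure S y :=
  subset_closure ⟨n, rfl⟩

theorem isClosed_orbitClosure [TopologicalSpace E] (S : E → E) (y : E) :
    IsClosed (orbitClosure S y) :=
  isClosed_closure

variable [TopologicalSpace E] [MeasurableSpace E] [BorelSpace E] {κ : Measure E}
  [IsProbabilityMeasure κ]

theorem ae_mem_of_eventually_iterate_mem (hS : Continuous S) (hκ : κ.map S = κ)
    (hκy : κ (orbitClosure S y) = 1) {C : Set E} (hC : IsClosed C)
    (hyC : ∀ᶠ n in atTop, S^[n] y ∈ C) : ∀ᵐ z ∂κ, z ∈ C := by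
  obtain ⟨N, hN⟩ := hyC.exists_forall_of_atTop
  have orbitClosure_subset : orbitClosure S y ⊆ S^[N] ⁻¹' C := by
    refine closure_minimal ?_ (hC.preimage (hS.iterate N))
    rintro _ ⟨n, rfl⟩
    rw [Set.mem_preimage, ← Function.iterate_add_apply]
    exact hN _ (Nat.le_add_right N n)
  have preserving : MeasurePreserving S^[N] κ κ := MeasurePreserving.iterate ⟨hS.measurable, hκ⟩ N
  refine (mem_ae_iff_prob_eq_one hC.measurableSet).2 (prob_le_one.antisymm ?_)
  calc 1 = κ (orbitClosure S y) := hκy.symm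
    _ ≤ κ (S^[N] ⁻¹' C) := measure_mono orbitClosure_subset
    _ = κ C := preserving.measure_preimage hC.nullMeasurableSet

theorem measure_eq_zero_of_banachDensityZero_visits (hS : Continuous S) (hκ : κ.map S = κ)
    (hκy : κ (orbitClosure S y) = 1) {U : Set E} (hU : IsOpen U)
    (hyU : BanachDensityZero {n | S^[n] y ∈ U}) : κ U = 0 := by
  refine nonpos_iff_eq_zero.1 (ENNReal.le_of_forall_pos_le_add fun ε hε _ => ?_)
  obtain ⟨M, hM, card_le⟩ := hyU ε hε
  let visits : E → ℝ≥0∞ := birkhoffSum S (U.indicator 1) M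
  have visits_lsc : LowerSemicontinuous visits :=
    lowerSemicontinuous_birkhoffSum hS (hU.lowerSemicontinuous_indicator zero_le_one) M
  have visits_le_ae : ∀ᵐ z ∂κ, visits z ≤ ε * M := by
    have closed : IsClosed {z | visits z ≤ ε * M} := visits_lsc.isClosed_preimage (ε * M)
    have visits_iterate_le : ∀ᶠ n in atTop, visits (S^[n] y) ≤ ε * M :=
      card_le.mono fun n card_le =>
        (birkhoffSum_indicator_one_iterate S U M n y).trans_le (mod_cast card_le)
    exact ae_mem_of_eventually_iterate_mem hS hκ hκy closed visits_iterate_le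
  have mul_le : M * κ U ≤ M * ε := calc
    M * κ U = ∫⁻ z, visits z ∂κ := by
      rw [lintegral_birkhoffSum ⟨hS.measurable, hκ⟩ (measurable_one.indicator hU.measurableSet),
        lintegral_indicator_one hU.measurableSet]
    _ ≤ ∫⁻ _, ε * M ∂κ := lintegral_mono_ae visits_le_ae
    _ = M * ε := by rw [lintegral_const, measure_univ, mul_one, mul_comm]
  rw [zero_add]
  exact (ENNReal.mul_le_mul_iff_right (mod_cast hM.ne') (ENNReal.natCast_ne_top M)).1 mul_le

end OrbitClosure

section KrylovBogolyubov

open scoped ENNReal Topology BoundedContinuousFunction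

variable {E : Type*} [MeasurableSpace E] {S : E → E}

/-- The uniform probability measure on the orbit segment `z, S z, …, S^(N-1) z`, counted with
multiplicity; it is the zero measure for `N = 0`. -/
noncomputable def empiricalMeasure (S : E → E) (z : E) (N : ℕ) : Measure E :=
  (N : ℝ≥0∞)⁻¹ • ∑ i ∈ Finset.range N, Measure.dirac (S^[i] z)

theorem empiricalMeasure_apply_eq_one {z : E} {C : Set E} (hzC : ∀ i, S^[i] z ∈ C) {N : ℕ}
    (hN : N ≠ 0) : empiricalMeasure S z N C = 1 := by
  simp only [empiricalMeasure, Measure.smul_apply, Measure.coe_finsetSum, Finset.sum_apply,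
    Measure.dirac_apply_of_mem (hzC _), Finset.sum_const, Finset.card_range, nsmul_eq_mul, mul_one,
    smul_eq_mul]
  exact ENNReal.inv_mul_cancel (mod_cast hN) (ENNReal.natCast_ne_top N)

instance isProbabilityMeasure_empiricalMeasure (S : E → E) (z : E) (N : ℕ) [NeZero N] :
    IsProbabilityMeasure (empiricalMeasure S z N) :=
  ⟨empiricalMeasure_apply_eq_one (fun _ => Set.mem_univ _) (NeZero.ne N)⟩

variable [TopologicalSpace E]

theorem integral_empiricalMeasure [OpensMeasurableSpace E] (S : E → E) (z : E) (N : ℕ)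
    (f : E →ᵇ ℝ) : ∫ w, f w ∂empiricalMeasure S z N = birkhoffAverage ℝ S f N z := by
  rw [empiricalMeasure, integral_smul_measure, integral_finsetSum_measure fun i _ => f.integrable _]
  simp only [integral_dirac' _ _ f.continuous.stronglyMeasurable, ENNReal.toReal_inv,
    ENNReal.toReal_natCast, birkhoffAverage, birkhoffSum]

theorem tendsto_integral_comp_sub_integral_empiricalMeasure [OpensMeasurableSpace E]
    (hS : Continuous S) (z : E) (f : E →ᵇ ℝ) :
    Tendsto (fun N => ∫ w, f (S w) ∂empiricalMeasure S z N - ∫ w, f w ∂empiricalMeasure S z N)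
      atTop (𝓝 0) := by
  have integral_comp (N : ℕ) :
      ∫ w, f (S w) ∂empiricalMeasure S z N = birkhoffAverage ℝ S f N (S z) := by
    refine (integral_empiricalMeasure S z N (f.compContinuous ⟨S, hS⟩)).trans ?_
    simp only [birkhoffAverage, birkhoffSum, ← Function.iterate_succ_apply,
      Function.iterate_succ_apply', BoundedContinuousFunction.compContinuous_apply,
      ContinuousMap.coe_mk]
  simp only [integral_comp, integral_empiricalMeasure]
  exact tendsto_birkhoffAverage_apply_sub_birkhoffAverage' ℝ f.isBounded_range S z

variable [BorelSpace E] [HasOuterApproxClosed E]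

theorem map_eq_self_of_tendsto_integral_comp_sub_integral {ι : Type*} {L : Filter ι} [L.NeBot]
    {A : ι → ProbabilityMeasure E} {κ : ProbabilityMeasure E} (hκ : Tendsto A L (𝓝 κ))
    (hS : Continuous S)
    (hA : ∀ f : E →ᵇ ℝ, Tendsto (fun i => ∫ w, f (S w) ∂(A i : Measure E) -
      ∫ w, f w ∂(A i : Measure E)) L (𝓝 0)) :
    (κ : Measure E).map S = κ := by
  have : IsProbabilityMeasure ((κ : Measure E).map S) :=
    Measure.isProbabilityMeasure_map hS.aemeasurable
  refine ext_of_forall_integral_eq_of_IsFiniteMeasure fun f => ?_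
  rw [integral_map hS.aemeasurable f.continuous.aestronglyMeasurable]
  have tendsto_integral := ProbabilityMeasure.tendsto_iff_forall_integral_tendsto.1 hκ
  exact sub_eq_zero.1 <| tendsto_nhds_unique
    ((tendsto_integral (f.compContinuous ⟨S, hS⟩)).sub (tendsto_integral f)) (hA f)

theorem exists_invariant_measure_orbitClosure_eq_one [T2Space E] [CompactSpace E]
    (hS : Continuous S) (z : E) :
    ∃ κ : Measure E, IsProbabilityMeasure κ ∧ κ.map S = κ ∧ κ (orbitClosure S z) = 1 := by
  let A (N : ℕ) : ProbabilityMeasure E := ⟨empiricalMeasure S z (N + 1), inferInstance⟩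
  let κ : ProbabilityMeasure E := ((hyperfilter ℕ).map A).lim
  have tendsto_κ : Tendsto A (hyperfilter ℕ) (𝓝 κ) := ((hyperfilter ℕ).map A).le_nhds_lim
  refine ⟨κ, inferInstance, ?_, prob_le_one.antisymm ?_⟩
  · refine map_eq_self_of_tendsto_integral_comp_sub_integral tendsto_κ hS fun f => ?_
    exact ((tendsto_integral_comp_sub_integral_empiricalMeasure hS z f).comp
      (tendsto_add_atTop_nat 1)).mono_left Nat.hyperfilter_le_atTop
  · have A_orbitClosure (N : ℕ) : (A N : Measure E) (orbitClosure S z) = 1 :=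
      empiricalMeasure_apply_eq_one (iterate_mem_orbitClosure S z) N.succ_ne_zero
    simpa only [A_orbitClosure, limsup_const] using
      ProbabilityMeasure.limsup_measure_closed_le_of_tendsto tendsto_κ (isClosed_orbitClosure S z)

end KrylovBogolyubov

section Shift

variable {X : Type*} {T : X → X}

/-- The shift on one-sided sequences. -/
def leftShift (z : ℕ → X) : ℕ → X := fun n => z (n + 1)

/-- The forward `T`-orbit of `p` as a sequence; it embeds `(X, T)` into the shift on
sequences, with left inverse `z ↦ z 0`. -/
def itinerary (T : X → X) (p : X) : ℕ → X := fun n => T^[n] p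

theorem leftShift_iterate_apply (n : ℕ) (z : ℕ → X) (m : ℕ) : leftShift^[n] z m = z (n + m) := by
  induction n generalizing z with
  | zero => rw [Function.iterate_zero_apply, zero_add]
  | succ n ih => rw [Function.iterate_succ_apply, ih, leftShift, Nat.add_right_comm]

theorem semiconj_itinerary (T : X → X) : Function.Semiconj (itinerary T) T leftShift :=
  fun _ => rfl

theorem setOf_leftShift_iterate_mem_eq_defects (T : X → X) (y : ℕ → X) :
    {n | leftShift^[n] y ∈ {z | z 1 ≠ T (z 0)}} = defects T y := by
  simp only [Set.mem_ofPred_eq, leftShift_iterate_apply, add_zero, defects]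

theorem eq_itinerary_of_forall_succ {z : ℕ → X} (hz : ∀ n, z (n + 1) = T (z n)) :
    z = itinerary T (z 0) := by
  ext n
  induction n with
  | zero => rfl
  | succ n ih => rw [hz, ih, itinerary, itinerary, Function.iterate_succ_apply']

section Measurable

variable [MeasurableSpace X]

theorem measurable_leftShift : Measurable (leftShift : (ℕ → X) → ℕ → X) :=
  measurable_pi_lambda _ fun n => measurable_pi_apply (n + 1)

theorem measurable_itinerary (hT : Measurable T) : Measurable (itinerary T) :=
  measurable_pi_lambda _ fun n => hT.iterate n

theorem map_eval_zero_map_eq_self (hT : Measurable T) {κ : Measure (ℕ → X)}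
    (hκ : κ.map leftShift = κ) (hκT : ∀ᵐ z ∂κ, z 1 = T (z 0)) :
    (κ.map fun z => z 0).map T = κ.map fun z => z 0 := calc
  (κ.map fun z => z 0).map T = κ.map fun z => T (z 0) :=
    Measure.map_map hT (measurable_pi_apply 0)
  _ = κ.map fun z => z 1 := Measure.map_congr (hκT.mono fun _ => Eq.symm)
  _ = (κ.map leftShift).map fun z => z 0 :=
    (Measure.map_map (measurable_pi_apply 0) measurable_leftShift).symm
  _ = κ.map fun z => z 0 := by rw [hκ]

theorem eq_map_itinerary_map_eval_zero (hT : Measurable T) {κ : Measure (ℕ → X)}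
    (hκT : ∀ᵐ z ∂κ, z = itinerary T (z 0)) :
    κ = (κ.map fun z => z 0).map (itinerary T) := calc
  κ = κ.map id := Measure.map_id.symm
  _ = κ.map fun z => itinerary T (z 0) := Measure.map_congr hκT
  _ = (κ.map fun z => z 0).map (itinerary T) :=
    (Measure.map_map (measurable_itinerary hT) (measurable_pi_apply 0)).symm

end Measurable

variable [TopologicalSpace X]

theorem continuous_leftShift : Continuous (leftShift : (ℕ → X) → ℕ → X) :=
  continuous_pi fun n => continuous_apply (n + 1)

theorem continuous_itinerary (hT : Continuous T) : Continuous (itinerary T) :=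
  continuous_pi fun n => hT.iterate n

variable [T2Space X] [SecondCountableTopology X] [MeasurableSpace X] [BorelSpace X]

theorem measureIso_itinerary (hT : Continuous T) (μ : Measure X) :
    MeasureIso T μ leftShift (μ.map (itinerary T)) := by
  have itinerary_measurable := measurable_itinerary hT.measurable
  refine ⟨itinerary T, fun z => z 0, itinerary_measurable, measurable_pi_apply 0, rfl,
    ae_of_all _ fun _ => rfl, ?_, ae_of_all _ (semiconj_itinerary T)⟩
  have closed : IsClosed {z : ℕ → X | itinerary T (z 0) = z} :=
    isClosed_eq ((continuous_itinerary hT).comp (continuous_apply 0)) continuous_id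
  exact (ae_map_iff itinerary_measurable.aemeasurable closed.measurableSet).2
    (ae_of_all _ fun _ => rfl)

theorem ae_eq_itinerary_of_banachDensityZero_defects (hT : Continuous T) {y : ℕ → X}
    (hy : BanachDensityZero (defects T y)) {κ : Measure (ℕ → X)} [IsProbabilityMeasure κ]
    (hκ : κ.map leftShift = κ) (hκy : κ (orbitClosure leftShift y) = 1) :
    ∀ᵐ z ∂κ, z = itinerary T (z 0) := by
  have isOpen_ne : IsOpen {z : ℕ → X | z 1 ≠ T (z 0)} :=
    isOpen_ne_fun (continuous_apply 1) (hT.comp (continuous_apply 0))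
  rw [← setOf_leftShift_iterate_mem_eq_defects] at hy
  have ae_one : ∀ᵐ z ∂κ, z 1 = T (z 0) :=
    measure_eq_zero_of_banachDensityZero_visits continuous_leftShift hκ hκy isOpen_ne hy
  have ae_succ : ∀ᵐ z ∂κ, ∀ n, z (n + 1) = T (z n) := by
    refine ae_all_iff.2 fun n => ?_
    have preserving : MeasurePreserving leftShift^[n] κ κ :=
      MeasurePreserving.iterate ⟨measurable_leftShift, hκ⟩ n
    filter_upwards [preserving.quasiMeasurePreserving.ae ae_one] with z hz
    simpa only [leftShift_iterate_apply, add_zero] using hz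
  exact ae_succ.mono fun _ => eq_itinerary_of_forall_succ

theorem eq_map_itinerary_of_banachDensityZero_defects (hT : Continuous T) {μ : Measure X}
    (hμ : UniquelyErgodicWith T μ) {y : ℕ → X} (hy : BanachDensityZero (defects T y))
    {κ : Measure (ℕ → X)} [IsProbabilityMeasure κ] (hκ : κ.map leftShift = κ)
    (hκy : κ (orbitClosure leftShift y) = 1) : κ = μ.map (itinerary T) := by
  have ae_itinerary := ae_eq_itinerary_of_banachDensityZero_defects hT hy hκ hκy
  have marginal_eq : (κ.map fun z => z 0) = μ := by
    refine hμ.2.2 _ (Measure.isProbabilityMeasure_map (measurable_pi_apply 0).aemeasurable) ?_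
    exact map_eval_zero_map_eq_self hT.measurable hκ (ae_itinerary.mono fun z hz => congrFun hz 1)
  rw [← marginal_eq]
  exact eq_map_itinerary_map_eval_zero hT.measurable ae_itinerary

theorem special_uniquely_ergodic_model_general [CompactSpace X] (hT : Continuous T)
    {μ : Measure X} (hμ : UniquelyErgodicWith T μ) {y : ℕ → X}
    (hy : BanachDensityZero (defects T y)) :
    IsProbabilityMeasure (μ.map (itinerary T)) ∧
      (μ.map (itinerary T)).map leftShift = μ.map (itinerary T) ∧
      μ.map (itinerary T) (orbitClosure leftShift y) = 1 ∧
      (∀ κ : Measure (ℕ → X), IsProbabilityMeasure κ → κ.map leftShift = κ →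
        κ (orbitClosure leftShift y) = 1 → κ = μ.map (itinerary T)) ∧
      MeasureIso T μ leftShift (μ.map (itinerary T)) := by
  have unique (κ : Measure (ℕ → X)) (_ : IsProbabilityMeasure κ) (hκ : κ.map leftShift = κ)
      (hκy : κ (orbitClosure leftShift y) = 1) : κ = μ.map (itinerary T) :=
    eq_map_itinerary_of_banachDensityZero_defects hT hμ hy hκ hκy
  obtain ⟨κ, κ_prob, hκ, hκy⟩ :=
    exists_invariant_measure_orbitClosure_eq_one (continuous_leftShift (X := X)) y
  obtain rfl := unique κ κ_prob hκ hκy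
  exact ⟨κ_prob, hκ, hκy, unique, measureIso_itinerary hT μ⟩

end Shift

/-- **Proposition 2.2.** Given a uniquely ergodic `(X,T)` with unique invariant measure `μ`,
a sequence `1 = b₁ < b₂ < ⋯` with `b_{k+1} - b_k → ∞` and points `(x_k)` in `X`, form the
sequence `y ∈ X^ℕ` with `y_n = Tⁿ x_k` for `b_k ≤ n < b_{k+1}`, let `S` be the shift on
`X^ℕ` and `Y` the closure of the forward `S`-orbit of `y`. Then the measure
`ν = (x ↦ (x, Tx, T²x, …))_* μ` is an `S`-invariant probability measure carried by `Y`,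
it is the unique `S`-invariant probability measure carried by `Y` (so `(Y,S)` is uniquely
ergodic), and `(Y,ν,S)` is measure-theoretically isomorphic to `(X,μ,T)`. -/
theorem special_uniquely_ergodic_model
    {X : Type*} [MetricSpace X] [CompactSpace X] [MeasurableSpace X] [BorelSpace X]
    (T : X → X) (hTcont : Continuous T) (μ : Measure X)
    (huniq : UniquelyErgodicWith T μ)
    (b : ℕ → ℕ) (hb1 : b 1 = 1) (hbmono : ∀ k ≥ 1, b k < b (k + 1))
    (hbgap : Tendsto (fun k : ℕ => b (k + 1) - b k) atTop atTop)
    (x : ℕ → X)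
    (y : ℕ → X) (hy : ∀ k ≥ 1, ∀ n : ℕ, b k ≤ n → n < b (k + 1) → y n = T^[n] (x k))
    (S : (ℕ → X) → (ℕ → X)) (hS : S = fun z n => z (n + 1))
    (Y : Set (ℕ → X)) (hY : Y = closure {z : ℕ → X | ∃ n : ℕ, z = S^[n] y})
    (ν : Measure (ℕ → X)) (hν : ν = μ.map (fun p => fun n => T^[n] p)) :
    IsProbabilityMeasure ν ∧ ν.map S = ν ∧ ν Y = 1 ∧
      (∀ κ : Measure (ℕ → X), IsProbabilityMeasure κ → κ.map S = κ → κ Y = 1 → κ = ν) ∧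
      MeasureIso T μ S ν := by
  subst hS hY hν
  exact special_uniquely_ergodic_model_general hTcont huniq
    (banachDensityZero_defects_of_orbit_blocks
      (strictMono_nat_of_lt_succ fun k => hbmono (k + 1) k.succ_pos)
      (hbgap.comp (tendsto_add_atTop_nat 1)) fun k => hy (k + 1) k.succ_pos)
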